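/- arXiv:0811.0946 — 2 statements merged into one kernel-verified Lean document; each statement's English description precedes it below -/
import Mathlib

section
/- Let ω > 0 and q > p > 1 be real numbers, and let f(u) = -ω·u + u^p - u^q. Then f̃(u) := (f'(u) + u·f''(u))·f(u) - u·f'(u)² < 0 for all u > 0 if and only if ω < η_{p,q}, where η_{p,q} = ((q-p)/(q-1))·((p-1)/(q-1))^{(p-1)/(q-p)}. -/
/-- The double power nonlinearity `f(u) = -ω·u + u^p - u^q` (real powers). -/
noncomputable def f (ω p q u : ℝ) : ℝ := -ω * u + u ^ p - u ^ q

/-- Its derivative for `u > 0`: `f'(u) = -ω + p·u^(p-1) - q·u^(q-1)`. -/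
noncomputable def f' (ω p q u : ℝ) : ℝ := -ω + p * u ^ (p - 1) - q * u ^ (q - 1)

/-- Its second derivative for `u > 0`:
`f''(u) = p(p-1)·u^(p-2) - q(q-1)·u^(q-2)`. -/
noncomputable def f'' (p q u : ℝ) : ℝ :=
  p * (p - 1) * u ^ (p - 2) - q * (q - 1) * u ^ (q - 2)

/-- The critical constant `η_{p,q}`. -/
noncomputable def etaPQ (p q : ℝ) : ℝ :=
  (q - p) / (q - 1) * ((p - 1) / (q - 1)) ^ ((p - 1) / (q - p))

/-!
For a sum of powers `∑ cᵢ u^αᵢ`, the expression `f̃` is the sum of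
`cᵢ cⱼ (αᵢ - αⱼ)² u^(αᵢ + αⱼ - 1)` over pairs `i < j`. With the exponents `1, p, q` this gives
`f̃(u) = u^p (ω ((q-1)² u^(q-p) - (p-1)²) - (q-p)² u^(q-1))`, so `f̃(u) < 0` says that `ω` times
one function of `u` lies strictly below another. By weighted AM-GM the corresponding weak
inequality holds for `ω = η_{p,q}`, with equality at the point `u₀` given by
`u₀^(q-p) = (p-1)/(q-1)`, where both functions are positive. Hence `η_{p,q}` is the threshold.
-/

/-- The expression `f̃ = (u f')' f - u f'²` attached to the nonlinearity `f`. -/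
noncomputable def ftilde (ω p q u : ℝ) : ℝ :=
  (f' ω p q u + u * f'' p q u) * f ω p q u - u * (f' ω p q u) ^ 2

/-- The point at which `f̃` has a double zero when `ω` takes the critical value `η_{p,q}`. -/
noncomputable def tangencyPoint (p q : ℝ) : ℝ := ((p - 1) / (q - 1)) ^ (q - p)⁻¹

theorem mul_rpow_sub_mul_rpow_le {a b x y : ℝ} (ha : 0 ≤ a) (hab : a ≤ b) (hx : 0 ≤ x)
    (hy : 0 ≤ y) :
    b * (x ^ (b - a) * y ^ a) ≤ (b - a) * x ^ b + a * y ^ b := by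
  rcases (ha.trans hab).eq_or_lt with rfl | hb
  · simp [le_antisymm hab ha]
  have amgm : (x ^ b) ^ ((b - a) / b) * (y ^ b) ^ (a / b) ≤ (b - a) / b * x ^ b + a / b * y ^ b :=
    Real.geom_mean_le_arith_mean2_weighted (div_nonneg (sub_nonneg.2 hab) hb.le)
      (div_nonneg ha hb.le) (by positivity) (by positivity) (by field_simp; ring)
  rw [← Real.rpow_mul hx, ← Real.rpow_mul hy, mul_div_cancel₀ _ hb.ne',
    mul_div_cancel₀ _ hb.ne'] at amgm
  calc b * (x ^ (b - a) * y ^ a) ≤ b * ((b - a) / b * x ^ b + a / b * y ^ b) := by gcongr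
    _ = (b - a) * x ^ b + a * y ^ b := by field_simp

section ftilde

variable {ω p q u : ℝ}

theorem ftilde_eq_rpow_mul (hu : 0 < u) :
    ftilde ω p q u =
      u ^ p * (ω * ((q - 1) ^ 2 * u ^ (q - p) - (p - 1) ^ 2) - (q - p) ^ 2 * u ^ (q - 1)) := by
  simp only [ftilde, f, f', f'', Real.rpow_sub hu, Real.rpow_one, Real.rpow_two]
  field_simp
  ring

theorem ftilde_neg_iff (hu : 0 < u) :
    ftilde ω p q u < 0 ↔
      ω * ((q - 1) ^ 2 * u ^ (q - p) - (p - 1) ^ 2) < (q - p) ^ 2 * u ^ (q - 1) := by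
  rw [ftilde_eq_rpow_mul hu, ← smul_eq_mul (u ^ p),
    smul_neg_iff_of_pos_left (Real.rpow_pos_of_pos hu p), sub_neg]

end ftilde

section tangencyPoint

variable {p q : ℝ}

theorem tangencyPoint_nonneg (hp : 1 ≤ p) (hpq : p ≤ q) : 0 ≤ tangencyPoint p q :=
  Real.rpow_nonneg (div_nonneg (by linarith) (by linarith)) _

theorem tangencyPoint_pos (hp : 1 < p) (hpq : p ≤ q) : 0 < tangencyPoint p q :=
  Real.rpow_pos_of_pos (div_pos (by linarith) (by linarith)) _

theorem tangencyPoint_rpow_sub (hp : 1 ≤ p) (hpq : p < q) :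
    tangencyPoint p q ^ (q - p) = (p - 1) / (q - 1) :=
  Real.rpow_inv_rpow (div_nonneg (by linarith) (by linarith)) (sub_pos.2 hpq).ne'

theorem tangencyPoint_rpow_sub_one (hp : 1 ≤ p) (hpq : p < q) :
    tangencyPoint p q ^ (q - 1) = tangencyPoint p q ^ (p - 1) * ((p - 1) / (q - 1)) := by
  rw [← tangencyPoint_rpow_sub hp hpq, ← Real.rpow_add_of_nonneg
    (tangencyPoint_nonneg hp hpq.le) (by linarith) (by linarith)]
  congr 1
  ring

theorem etaPQ_eq_mul_tangencyPoint_rpow (hp : 1 ≤ p) (hpq : p ≤ q) :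
    etaPQ p q = (q - p) / (q - 1) * tangencyPoint p q ^ (p - 1) := by
  rw [etaPQ, tangencyPoint, ← Real.rpow_mul (div_nonneg (by linarith) (by linarith)),
    inv_mul_eq_div]

theorem etaPQ_mul_le {u : ℝ} (hp : 1 ≤ p) (hpq : p < q) (hu : 0 ≤ u) :
    etaPQ p q * ((q - 1) ^ 2 * u ^ (q - p) - (p - 1) ^ 2) ≤ (q - p) ^ 2 * u ^ (q - 1) := by
  have hq : q - 1 ≠ 0 := by linarith
  have young := mul_rpow_sub_mul_rpow_le (sub_nonneg.2 hp) (sub_le_sub_right hpq.le 1) hu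
    (tangencyPoint_nonneg hp hpq.le)
  rw [sub_sub_sub_cancel_right, tangencyPoint_rpow_sub_one hp hpq] at young
  rw [etaPQ_eq_mul_tangencyPoint_rpow hp hpq.le]
  set v := tangencyPoint p q ^ (p - 1)
  calc (q - p) / (q - 1) * v * ((q - 1) ^ 2 * u ^ (q - p) - (p - 1) ^ 2)
      = (q - p) * ((q - 1) * (u ^ (q - p) * v) - (p - 1) * (v * ((p - 1) / (q - 1)))) := by
        field_simp
    _ ≤ (q - p) * ((q - p) * u ^ (q - 1)) :=
        mul_le_mul_of_nonneg_left (sub_le_iff_le_add.2 young) (sub_nonneg.2 hpq.le)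
    _ = (q - p) ^ 2 * u ^ (q - 1) := by ring

theorem sq_mul_tangencyPoint_rpow_sub_sq (hp : 1 ≤ p) (hpq : p < q) :
    (q - 1) ^ 2 * tangencyPoint p q ^ (q - p) - (p - 1) ^ 2 = (p - 1) * (q - p) := by
  have hq : q - 1 ≠ 0 := by linarith
  rw [tangencyPoint_rpow_sub hp hpq]
  field_simp [hq]
  ring

theorem sq_mul_tangencyPoint_rpow_sub_one (hp : 1 ≤ p) (hpq : p < q) :
    (q - p) ^ 2 * tangencyPoint p q ^ (q - 1) = etaPQ p q * ((p - 1) * (q - p)) := by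
  rw [tangencyPoint_rpow_sub_one hp hpq, etaPQ_eq_mul_tangencyPoint_rpow hp hpq.le]
  ring

end tangencyPoint

section threshold

variable {ω p q : ℝ}

theorem ftilde_tangencyPoint_neg_iff (hp : 1 < p) (hpq : p < q) :
    ftilde ω p q (tangencyPoint p q) < 0 ↔ ω < etaPQ p q := by
  rw [ftilde_neg_iff (tangencyPoint_pos hp hpq.le), sq_mul_tangencyPoint_rpow_sub_sq hp.le hpq,
    sq_mul_tangencyPoint_rpow_sub_one hp.le hpq,
    mul_lt_mul_iff_left₀ (mul_pos (sub_pos.2 hp) (sub_pos.2 hpq))]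

theorem ftilde_neg_of_lt_etaPQ {u : ℝ} (hω : 0 ≤ ω) (hp : 1 ≤ p) (hpq : p < q) (hu : 0 < u)
    (hlt : ω < etaPQ p q) : ftilde ω p q u < 0 := by
  have hη : 0 < etaPQ p q := hω.trans_lt hlt
  have hpos : 0 < (q - p) ^ 2 * u ^ (q - 1) :=
    mul_pos (pow_pos (sub_pos.2 hpq) 2) (Real.rpow_pos_of_pos hu _)
  rw [ftilde_neg_iff hu]
  calc ω * ((q - 1) ^ 2 * u ^ (q - p) - (p - 1) ^ 2)
      = ω / etaPQ p q * (etaPQ p q * ((q - 1) ^ 2 * u ^ (q - p) - (p - 1) ^ 2)) := by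
        field_simp
    _ ≤ ω / etaPQ p q * ((q - p) ^ 2 * u ^ (q - 1)) :=
        mul_le_mul_of_nonneg_left (etaPQ_mul_le hp hpq hu.le) (div_nonneg hω hη.le)
    _ < (q - p) ^ 2 * u ^ (q - 1) := mul_lt_of_lt_one_left hpos ((div_lt_one hη).2 hlt)

end threshold

theorem ftilde_neg_iff_omega_lt_eta (ω p q : ℝ) (hω : 0 < ω) (hp : 1 < p)
    (hpq : p < q) :
    (∀ u : ℝ, 0 < u →
        (f' ω p q u + u * f'' p q u) * f ω p q u - u * (f' ω p q u) ^ 2 < 0) ↔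
      ω < etaPQ p q :=
  ⟨fun hneg ↦ (ftilde_tangencyPoint_neg_iff hp hpq).1 (hneg _ (tangencyPoint_pos hp hpq.le)),
    fun hlt _ hu ↦ ftilde_neg_of_lt_etaPQ hω.le hp.le hpq hu hlt⟩
end

section
/- Let ω > 0 and q > p > 1 be real numbers, and let f(u) = -ω·u + u^p - u^q, F(u) = -ω·u²/2 + u^{p+1}/(p+1) - u^{q+1}/(q+1). If there exists u > 0 with F(u) > 0, then f̃(u) := (f'(u) + u·f''(u))·f(u) - u·f'(u)² < 0 for all u > 0. -/
/-- The primitive `F(u) = -ω·u²/2 + u^(p+1)/(p+1) - u^(q+1)/(q+1)`. -/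
noncomputable def F (ω p q u : ℝ) : ℝ :=
  -ω * u ^ 2 / 2 + u ^ (p + 1) / (p + 1) - u ^ (q + 1) / (q + 1)

/-!
For `D = u · d/du` one has `u · f̃ = f · D²f - (Df)²`, and for `f = ∑ᵢ cᵢ u^αᵢ` this equals
`∑_{i<j} cᵢ cⱼ (αᵢ - αⱼ)² u^(αᵢ + αⱼ)`. With `a = p - 1` and `b = q - p`, the claim becomes
`ω ((a + b)² u^b - a²) < b² u^(a + b)`, which is affine in `ω`.

By the mean value theorem, `F > 0` somewhere forces `f > 0` somewhere, so `ω` is less than the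
maximum of `u^a - u^(a + b)`, attained at the point `w` with `(a + b) w^b = a`. The claim is clear
where the coefficient of `ω` is nonpositive; elsewhere `ω` may be replaced by that maximum, and what
remains is the weighted AM-GM inequality for `w^(a + b)` and `u^(a + b)`.
-/

section PowerInequalities

variable {a b u v w x y ω : ℝ}

lemma add_mul_rpow_mul_rpow_le (ha : 0 ≤ a) (hb : 0 ≤ b) (hx : 0 ≤ x) (hy : 0 ≤ y) :
    (a + b) * (x ^ a * y ^ b) ≤ a * x ^ (a + b) + b * y ^ (a + b) := by
  rcases (add_nonneg ha hb).eq_or_lt with hab | hab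
  · obtain ⟨rfl, rfl⟩ := (add_eq_zero_iff_of_nonneg ha hb).1 hab.symm
    simp
  have amgm : (x ^ (a + b)) ^ (a / (a + b)) * (y ^ (a + b)) ^ (b / (a + b)) ≤
      a / (a + b) * x ^ (a + b) + b / (a + b) * y ^ (a + b) :=
    Real.geom_mean_le_arith_mean2_weighted (by positivity) (by positivity) (by positivity)
      (by positivity) (by field_simp)
  rw [← Real.rpow_mul hx, ← Real.rpow_mul hy, mul_div_cancel₀ _ hab.ne',
    mul_div_cancel₀ _ hab.ne'] at amgm
  calc (a + b) * (x ^ a * y ^ b)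
      ≤ (a + b) * (a / (a + b) * x ^ (a + b) + b / (a + b) * y ^ (a + b)) := by gcongr
    _ = a * x ^ (a + b) + b * y ^ (a + b) := by field_simp

lemma exists_pos_add_mul_rpow_eq (ha : 0 < a) (hb : 0 < b) :
    ∃ w : ℝ, 0 < w ∧ (a + b) * w ^ b = a := by
  refine ⟨(a / (a + b)) ^ b⁻¹, by positivity, ?_⟩
  rw [Real.rpow_inv_rpow (by positivity) hb.ne', mul_div_cancel₀ _ (by positivity)]

lemma add_mul_rpow_add_of_critical (hw : 0 < w) (hcrit : (a + b) * w ^ b = a) :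
    (a + b) * w ^ (a + b) = a * w ^ a := by
  rw [Real.rpow_add hw]
  linear_combination w ^ a * hcrit

lemma rpow_sub_rpow_add_le_of_critical (ha : 0 < a) (hb : 0 ≤ b) (hw : 0 < w)
    (hcrit : (a + b) * w ^ b = a) (hv : 0 ≤ v) :
    v ^ a - v ^ (a + b) ≤ w ^ a - w ^ (a + b) := by
  have amgm := add_mul_rpow_mul_rpow_le ha.le hb hv hw.le
  have hwab := add_mul_rpow_add_of_critical hw hcrit
  refine le_of_mul_le_mul_left ?_ ha
  calc a * (v ^ a - v ^ (a + b))
      = (a + b) * (v ^ a * w ^ b) - a * v ^ (a + b) := by linear_combination -v ^ a * hcrit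
    _ ≤ b * w ^ (a + b) := by linarith
    _ = a * (w ^ a - w ^ (a + b)) := by linear_combination hwab

lemma rpow_sub_rpow_add_mul_le_of_critical (ha : 0 < a) (hb : 0 ≤ b) (hw : 0 < w)
    (hcrit : (a + b) * w ^ b = a) (hu : 0 ≤ u) :
    (w ^ a - w ^ (a + b)) * ((a + b) ^ 2 * u ^ b - a ^ 2) ≤ b ^ 2 * u ^ (a + b) := by
  have amgm := add_mul_rpow_mul_rpow_le ha.le hb hw.le hu
  have hwab := add_mul_rpow_add_of_critical hw hcrit
  have hab : 0 < a + b := by positivity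
  refine le_of_mul_le_mul_left ?_ hab
  calc (a + b) * ((w ^ a - w ^ (a + b)) * ((a + b) ^ 2 * u ^ b - a ^ 2))
      = b * ((a + b) * ((a + b) * (w ^ a * u ^ b)) - a ^ 2 * w ^ a) := by
        linear_combination -((a + b) ^ 2 * u ^ b - a ^ 2) * hwab
    _ ≤ b * ((a + b) * (a * w ^ (a + b) + b * u ^ (a + b)) - a ^ 2 * w ^ a) := by gcongr
    _ = (a + b) * (b ^ 2 * u ^ (a + b)) := by linear_combination a * b * hwab

lemma mul_sub_sq_lt_of_lt_rpow_sub_rpow_add (hω : 0 ≤ ω) (ha : 0 < a) (hb : 0 < b)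
    (hv : 0 ≤ v) (hωv : ω < v ^ a - v ^ (a + b)) (hu : 0 < u) :
    ω * ((a + b) ^ 2 * u ^ b - a ^ 2) < b ^ 2 * u ^ (a + b) := by
  obtain ⟨w, hw, hcrit⟩ := exists_pos_add_mul_rpow_eq ha hb
  have hωw : ω < w ^ a - w ^ (a + b) :=
    hωv.trans_le (rpow_sub_rpow_add_le_of_critical ha hb.le hw hcrit hv)
  rcases le_or_gt ((a + b) ^ 2 * u ^ b - a ^ 2) 0 with hcoef | hcoef
  · exact (mul_nonpos_of_nonneg_of_nonpos hω hcoef).trans_lt (by positivity)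
  · exact (mul_lt_mul_of_pos_right hωw hcoef).trans_le
      (rpow_sub_rpow_add_mul_le_of_critical ha hb.le hw hcrit hu.le)

end PowerInequalities

section DoublePower

variable {ω p q u v : ℝ}

lemma f_eq_mul (hu : u ≠ 0) : f ω p q u = u * (u ^ (p - 1) - u ^ (q - 1) - ω) := by
  rw [f, Real.rpow_sub_one hu, Real.rpow_sub_one hu]
  field_simp
  ring

lemma lt_rpow_sub_rpow_of_f_pos (hv : 0 < v) (hf : 0 < f ω p q v) :
    ω < v ^ (p - 1) - v ^ (q - 1) := by
  rw [f_eq_mul hv.ne'] at hf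
  exact sub_pos.1 (pos_of_mul_pos_right hf hv.le)

lemma mul_f''_eq (hu : u ≠ 0) :
    u * f'' p q u = p * (p - 1) * u ^ (p - 1) - q * (q - 1) * u ^ (q - 1) := by
  have mul_rpow_sub_two (r : ℝ) : u * u ^ (r - 2) = u ^ (r - 1) := by
    rw [show r - 2 = r - 1 - 1 by ring, Real.rpow_sub_one hu, mul_div_cancel₀ _ hu]
  rw [f'', ← mul_rpow_sub_two p, ← mul_rpow_sub_two q]
  ring

lemma f'_add_mul_f''_mul_f_sub_eq (hu : u ≠ 0) :
    (f' ω p q u + u * f'' p q u) * f ω p q u - u * (f' ω p q u) ^ 2 =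
      u * (ω * (q - 1) ^ 2 * u ^ (q - 1) - ω * (p - 1) ^ 2 * u ^ (p - 1)
        - (q - p) ^ 2 * (u ^ (p - 1) * u ^ (q - 1))) := by
  rw [mul_f''_eq hu, f_eq_mul hu, f']
  ring

lemma F_zero (hp : p + 1 ≠ 0) (hq : q + 1 ≠ 0) : F ω p q 0 = 0 := by
  simp [F, Real.zero_rpow hp, Real.zero_rpow hq]

lemma hasDerivAt_F (hp : 0 ≤ p) (hq : 0 ≤ q) (u : ℝ) :
    HasDerivAt (F ω p q) (f ω p q u) u := by
  have hasDerivAt_power {r : ℝ} (hr : 0 ≤ r) :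
      HasDerivAt (fun x : ℝ => x ^ (r + 1) / (r + 1)) (u ^ r) u := by
    refine ((Real.hasDerivAt_rpow_const
      (Or.inr (le_add_of_nonneg_left hr))).div_const (r + 1)).congr_deriv ?_
    rw [add_sub_cancel_right, mul_div_cancel_left₀ _ (by positivity)]
  have hasDerivAt_quadratic : HasDerivAt (fun x : ℝ => -ω * x ^ 2 / 2) (-ω * u) u :=
    (((hasDerivAt_pow 2 u).const_mul (-ω)).div_const 2).congr_deriv (by ring)
  exact (hasDerivAt_quadratic.add (hasDerivAt_power hp)).sub (hasDerivAt_power hq)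

lemma exists_f_pos_of_F_pos (hp : 0 ≤ p) (hq : 0 ≤ q) (hv : 0 < v) (hF : 0 < F ω p q v) :
    ∃ c : ℝ, 0 < c ∧ 0 < f ω p q c := by
  obtain ⟨c, hc, hslope⟩ := exists_hasDerivAt_eq_slope (F ω p q) (f ω p q) hv
    (fun x _ => (hasDerivAt_F hp hq x).continuousAt.continuousWithinAt)
    (fun x _ => hasDerivAt_F hp hq x)
  refine ⟨c, hc.1, ?_⟩
  rw [hslope, F_zero (by positivity) (by positivity), sub_zero, sub_zero]
  positivity

end DoublePower

theorem existence_implies_uniqueness_condition_general (ω p q : ℝ) (hω : 0 ≤ ω)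
    (hp : 1 < p) (hpq : p < q) (hf : ∃ v : ℝ, 0 < v ∧ 0 < f ω p q v) :
    ∀ u : ℝ, 0 < u →
      (f' ω p q u + u * f'' p q u) * f ω p q u - u * (f' ω p q u) ^ 2 < 0 := by
  intro u hu
  obtain ⟨v, hv, hfv⟩ := hf
  have hexp : p - 1 + (q - p) = q - 1 := sub_add_sub_cancel' p 1 q
  have hωv : ω < v ^ (p - 1) - v ^ (p - 1 + (q - p)) := by
    simpa only [hexp] using lt_rpow_sub_rpow_of_f_pos hv hfv
  have key : ω * ((q - 1) ^ 2 * u ^ (q - p) - (p - 1) ^ 2) < (q - p) ^ 2 * u ^ (q - 1) := by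
    simpa only [hexp] using mul_sub_sq_lt_of_lt_rpow_sub_rpow_add hω (sub_pos.2 hp)
      (sub_pos.2 hpq) hv.le hωv hu
  have hsplit : u ^ (q - 1) = u ^ (p - 1) * u ^ (q - p) := by rw [← Real.rpow_add hu, hexp]
  rw [f'_add_mul_f''_mul_f_sub_eq hu.ne']
  refine mul_neg_of_pos_of_neg hu ?_
  calc ω * (q - 1) ^ 2 * u ^ (q - 1) - ω * (p - 1) ^ 2 * u ^ (p - 1)
        - (q - p) ^ 2 * (u ^ (p - 1) * u ^ (q - 1))
      = u ^ (p - 1) * (ω * ((q - 1) ^ 2 * u ^ (q - p) - (p - 1) ^ 2)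
          - (q - p) ^ 2 * u ^ (q - 1)) := by linear_combination ω * (q - 1) ^ 2 * hsplit
    _ < 0 := mul_neg_of_pos_of_neg (by positivity) (sub_neg.2 key)

theorem existence_implies_uniqueness_condition (ω p q : ℝ) (hω : 0 < ω)
    (hp : 1 < p) (hpq : p < q) (hF : ∃ u : ℝ, 0 < u ∧ 0 < F ω p q u) :
    ∀ u : ℝ, 0 < u →
      (f' ω p q u + u * f'' p q u) * f ω p q u - u * (f' ω p q u) ^ 2 < 0 := by
  obtain ⟨v, hv, hFv⟩ := hF
  exact existence_implies_uniqueness_condition_general ω p q hω.le hp hpq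
    (exists_f_pos_of_F_pos (by linarith) (by linarith) hv hFv)
end
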